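/- (Proposition 1.) Let B be a finite set and let (B'_i)_{i ∈ ι} be a nonempty finite family of pairwise distinct subsets of B forming an antichain under inclusion, with 0 < |B'_i| < |B| for all i. Give each B'_i the simple basic belief assignment with weight a_i = |B'_i|/|B|, let m be the Dempster combination over the frame B, let Bel be its credibility function, and for each i set s_i = Σ m(X), the sum over focal elements X of m with X ⊊ B'_i arising as nonempty intersections ⋂_{j ∈ S} B'_j with |S| ≥ 2 (so that Bel(B'_i) = m(B'_i) + s_i). Let W_Bel = {i ∈ ι : Bel(B'_i) is maximal} and W_card = {i ∈ ι : |B'_i| is maximal}. Then W_Bel = W_card if and only if both of the following hold: (1) for all i, j ∈ W_Bel, m(B'_i) = m(B'_j) and s_i = s_j; (2) for all i ∈ W_Bel and all j ∉ W_Bel, m(B'_i) − m(B'_j) > max(0, s_j − s_i). -/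

import Mathlib

open Finset

/-- The intersection `⋂_{i ∈ S} B'_i` taken within the frame `Θ`, with the convention
that the empty intersection (`S = ∅`) is the whole frame `Θ`. -/
def interS {α ι : Type*} [DecidableEq α] (Θ : Finset α) (B : ι → Finset α)
    (S : Finset ι) : Finset α :=
  Θ.filter (fun x => ∀ i ∈ S, x ∈ B i)

/-- The conjunctive weight `Π_{i ∈ S} a_i · Π_{i ∉ S} (1 − a_i)` of a subfamily `S` when
combining the simple BBAs with focal sets `B'_i` and weights `a_i`. -/
def weight {ι : Type*} [Fintype ι] [DecidableEq ι] (a : ι → ℝ) (S : Finset ι) : ℝ :=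
  (∏ i ∈ S, a i) * ∏ i ∈ Finset.univ \ S, (1 - a i)

/-- The total conflict `k` of the conjunctive combination of the simple BBAs with focal
sets `B'_i ⊆ Θ` and weights `a_i`: the total weight of the subfamilies with empty
intersection. -/
def totalConflict {α ι : Type*} [DecidableEq α] [Fintype ι] [DecidableEq ι]
    (Θ : Finset α) (B : ι → Finset α) (a : ι → ℝ) : ℝ :=
  ∑ S ∈ (Finset.univ : Finset ι).powerset,
    if interS Θ B S = ∅ then weight a S else 0

/-- The Dempster combination of the simple BBAs with focal sets `B'_i ⊆ Θ` and weights
`a_i`: `m(X) = (1−k)⁻¹ · Σ_{S : ⋂_{i ∈ S} B'_i = X} Π_{i ∈ S} a_i · Π_{i ∉ S} (1 − a_i)`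
for `X ≠ ∅`, and `m(∅) = 0`. -/
noncomputable def dempsterCombo {α ι : Type*} [DecidableEq α] [Fintype ι] [DecidableEq ι]
    (Θ : Finset α) (B : ι → Finset α) (a : ι → ℝ) (X : Finset α) : ℝ :=
  if X = ∅ then 0 else
    (1 - totalConflict Θ B a)⁻¹ *
      ∑ S ∈ (Finset.univ : Finset ι).powerset,
        if interS Θ B S = X then weight a S else 0

/-- The credibility (belief) function of a basic belief assignment `m`:
`Bel(A) = Σ_{X ⊆ A, X ≠ ∅} m(X)`. -/
noncomputable def credibility {α : Type*} [DecidableEq α] (m : Finset α → ℝ)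
    (A : Finset α) : ℝ :=
  ∑ X ∈ A.powerset.filter (fun X => X ≠ ∅), m X

/-- The collection of focal sets arising as nonempty intersections `⋂_{j ∈ S} B'_j` of
subfamilies with at least two members. -/
def fociInters {α ι : Type*} [DecidableEq α] [Fintype ι] [DecidableEq ι]
    (Θ : Finset α) (B : ι → Finset α) : Finset (Finset α) :=
  (((Finset.univ : Finset ι).powerset.filter (fun S => 2 ≤ S.card)).image
    (interS Θ B)).filter (fun X => X ≠ ∅)


section Helpers

variable {α ι : Type*} [DecidableEq α]

lemma interS_empty (Θ : Finset α) (B : ι → Finset α) : interS Θ B ∅ = Θ := by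
  simp [interS]

lemma interS_singleton {Θ : Finset α} {B : ι → Finset α} {i : ι} (h : B i ⊆ Θ) :
    interS Θ B {i} = B i := by
  ext x
  simpa [interS] using @h x

lemma interS_subset {Θ : Finset α} {B : ι → Finset α} {S : Finset ι} {i : ι} (hi : i ∈ S) :
    interS Θ B S ⊆ B i := fun _ hx => (Finset.mem_filter.mp hx).2 i hi

/-- In an antichain of proper subsets of the frame, a member arises only as the
intersection of its own singleton subfamily. -/
lemma interS_eq_iff {Θ : Finset α} {B : ι → Finset α} (hsub : ∀ i, B i ⊂ Θ)
    (hanti : ∀ i j, i ≠ j → ¬ B i ⊆ B j) (S : Finset ι) (i : ι) :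
    interS Θ B S = B i ↔ S = {i} := by
  refine ⟨fun h => ?_, fun h => h ▸ interS_singleton (hsub i).subset⟩
  have hS : ∀ j ∈ S, j = i := fun j hj => by
    by_contra hne
    exact hanti i j (Ne.symm hne) (h ▸ interS_subset hj)
  refine Finset.eq_singleton_iff_nonempty_unique_mem.mpr
    ⟨Finset.nonempty_iff_ne_empty.mpr fun h0 => ?_, hS⟩
  rw [h0, interS_empty] at h
  exact (hsub i).ne h.symm

variable [Fintype ι] [DecidableEq ι]

lemma weight_pos {a : ι → ℝ} (ha : ∀ i, 0 < a i ∧ a i < 1) (S : Finset ι) : 0 < weight a S :=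
  mul_pos (Finset.prod_pos fun i _ => (ha i).1)
    (Finset.prod_pos fun i _ => sub_pos.mpr (ha i).2)

lemma sum_weight (a : ι → ℝ) : ∑ S ∈ (Finset.univ : Finset ι).powerset, weight a S = 1 := by
  simpa [weight] using (Finset.prod_add a (fun i => 1 - a i) Finset.univ).symm

lemma weight_singleton (a : ι → ℝ) (i : ι) :
    weight a {i} * (1 - a i) = a i * ∏ j, (1 - a j) := by
  rw [weight, Finset.prod_singleton, mul_assoc,
    ← Finset.prod_sdiff (Finset.subset_univ {i}), Finset.prod_singleton]

lemma weight_singleton_lt {a : ι → ℝ} (ha : ∀ i, 0 < a i ∧ a i < 1) {i j : ι} (h : a i < a j) :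
    weight a {i} < weight a {j} := by
  have hP : 0 < ∏ k, (1 - a k) := Finset.prod_pos fun k _ => sub_pos.mpr (ha k).2
  have hi : 0 < 1 - a i := sub_pos.mpr (ha i).2
  have hj : 0 < 1 - a j := sub_pos.mpr (ha j).2
  rw [eq_div_of_mul_eq hi.ne' (weight_singleton a i),
    eq_div_of_mul_eq hj.ne' (weight_singleton a j), div_lt_div_iff₀ hi hj]
  nlinarith

lemma totalConflict_lt_one {Θ : Finset α} (hΘ : Θ ≠ ∅) (B : ι → Finset α) {a : ι → ℝ}
    (ha : ∀ i, 0 < a i ∧ a i < 1) : totalConflict Θ B a < 1 := by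
  rw [← sum_weight a, totalConflict]
  refine Finset.sum_lt_sum (fun S _ => ?_) ⟨∅, by simp, ?_⟩
  · split_ifs
    exacts [le_rfl, (weight_pos ha S).le]
  · rw [interS_empty, if_neg hΘ]
    exact weight_pos ha ∅

lemma dempsterCombo_member {Θ : Finset α} {B : ι → Finset α} (hsub : ∀ i, B i ⊂ Θ)
    (hanti : ∀ i j, i ≠ j → ¬ B i ⊆ B j) (a : ι → ℝ) {i : ι} (hi : B i ≠ ∅) :
    dempsterCombo Θ B a (B i) = (1 - totalConflict Θ B a)⁻¹ * weight a {i} := by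
  simp [dempsterCombo, hi, interS_eq_iff hsub hanti]

lemma dempsterCombo_eq_zero {Θ : Finset α} {B : ι → Finset α} (a : ι → ℝ) {X : Finset α}
    (hX : ∀ S, interS Θ B S ≠ X) : dempsterCombo Θ B a X = 0 := by
  simp [dempsterCombo, hX]

/-- The credibility of a member of an antichain splits into its own mass and the mass of
the focal intersections strictly inside it. -/
lemma credibility_member {Θ : Finset α} {B : ι → Finset α} (hsub : ∀ i, B i ⊂ Θ)
    (hanti : ∀ i j, i ≠ j → ¬ B i ⊆ B j) (a : ι → ℝ) {i : ι} (hi : B i ≠ ∅) :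
    credibility (dempsterCombo Θ B a) (B i) = dempsterCombo Θ B a (B i) +
      ∑ X ∈ (fociInters Θ B).filter (fun X => X ⊂ B i), dempsterCombo Θ B a X := by
  rw [← Finset.sum_insert (by simp), credibility]
  symm
  refine Finset.sum_subset (fun X hX => ?_) fun X hX hX' => dempsterCombo_eq_zero a fun S hS => ?_
  · rcases Finset.mem_insert.mp hX with rfl | hX
    · simp [hi]
    · simp only [fociInters, Finset.mem_filter] at hX
      simp [hX.1.2, hX.2.subset]
  · simp only [Finset.mem_filter, Finset.mem_powerset] at hX
    simp only [Finset.mem_insert, not_or] at hX'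
    have hss : X ⊂ B i := hX.1.ssubset_of_ne hX'.1
    refine hX'.2 (Finset.mem_filter.mpr ⟨Finset.mem_filter.mpr
      ⟨Finset.mem_image.mpr ⟨S, ?_, hS⟩, hX.2⟩, hss⟩)
    simp only [Finset.mem_filter, Finset.mem_powerset, Finset.subset_univ, true_and]
    by_contra! hlt
    obtain h0 | h1 : S.card = 0 ∨ S.card = 1 := by omega
    · rw [Finset.card_eq_zero.mp h0, interS_empty] at hS
      exact (hS ▸ hss).not_subset (hsub i).subset
    · obtain ⟨j, rfl⟩ := Finset.card_eq_one.mp h1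
      rw [interS_singleton (hsub j).subset] at hS
      subst hS
      exact hanti j i (fun h => hX'.1 (h ▸ rfl)) hX.1

end Helpers

/-- Proposition 1: let the pairwise distinct subbases `B'_i ⊆ B`, forming an antichain
under inclusion with `0 < |B'_i| < |B|`, carry simple BBAs with weights
`a_i = |B'_i|/|B|`; let `m` be their Dempster combination, `Bel` its credibility
function, and `s_i` the total mass of the focal intersections strictly inside `B'_i`
(so `Bel(B'_i) = m(B'_i) + s_i`). Then the set `W_Bel` of indices of maximal
credibility equals the set `W_card` of indices of maximal cardinality iff
(1) for all `i, j ∈ W_Bel`, `m(B'_i) = m(B'_j)` and `s_i = s_j`, and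
(2) for all `i ∈ W_Bel` and `j ∉ W_Bel`, `m(B'_i) − m(B'_j) > max(0, s_j − s_i)`. -/
theorem csrg_eq_rsrg_iff
    {α ι : Type*} [DecidableEq α] [Fintype ι] [DecidableEq ι] [Nonempty ι]
    (B : Finset α) (B' : ι → Finset α) (hBsub : ∀ i, B' i ⊆ B)
    (hdistinct : ∀ i j, i ≠ j → B' i ≠ B' j)
    (hantichain : ∀ i j, i ≠ j → ¬ B' i ⊆ B' j)
    (hcard : ∀ i, 0 < (B' i).card ∧ (B' i).card < B.card)
    (a : ι → ℝ) (ha : ∀ i, a i = ((B' i).card : ℝ) / (B.card : ℝ))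
    (m : Finset α → ℝ) (hm : m = dempsterCombo B B' a)
    (Bel : Finset α → ℝ) (hBel : ∀ A, Bel A = credibility m A)
    (s : ι → ℝ)
    (hs : ∀ i, s i = ∑ X ∈ (fociInters B B').filter (fun X => X ⊂ B' i), m X)
    (WBel WCard : Set ι)
    (hWBel : WBel = {i : ι | ∀ j : ι, Bel (B' j) ≤ Bel (B' i)})
    (hWCard : WCard = {i : ι | ∀ j : ι, (B' j).card ≤ (B' i).card}) :
    WBel = WCard ↔
      ((∀ i ∈ WBel, ∀ j ∈ WBel, m (B' i) = m (B' j) ∧ s i = s j) ∧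
       (∀ i ∈ WBel, ∀ j : ι, j ∉ WBel →
          m (B' i) - m (B' j) > max 0 (s j - s i))) := by
  have hsub : ∀ i, B' i ⊂ B := fun i =>
    (hBsub i).ssubset_of_ne fun h => (h ▸ (hcard i).2).false
  have hne : ∀ i, B' i ≠ ∅ := fun i => (Finset.card_pos.mp (hcard i).1).ne_empty
  obtain ⟨i₀⟩ := ‹Nonempty ι›
  have hBpos : (0 : ℝ) < B.card := Nat.cast_pos.mpr ((hcard i₀).1.trans (hcard i₀).2)
  have ha01 : ∀ i, 0 < a i ∧ a i < 1 := fun i => by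
    rw [ha, div_lt_one hBpos]
    exact ⟨div_pos (Nat.cast_pos.mpr (hcard i).1) hBpos, Nat.cast_lt.mpr (hcard i).2⟩
  have hmlt : ∀ i j, (B' i).card < (B' j).card → m (B' i) < m (B' j) := fun i j hij => by
    rw [hm, dempsterCombo_member hsub hantichain a (hne i),
      dempsterCombo_member hsub hantichain a (hne j)]
    refine mul_lt_mul_of_pos_left (weight_singleton_lt ha01 ?_)
      (inv_pos.mpr (sub_pos.mpr (totalConflict_lt_one ?_ B' ha01)))
    · rw [ha, ha]
      exact div_lt_div_of_pos_right (Nat.cast_lt.mpr hij) hBpos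
    · exact ((Finset.nonempty_iff_ne_empty.mpr (hne i₀)).mono (hBsub i₀)).ne_empty
  have hmeq : ∀ i j, (B' i).card = (B' j).card → m (B' i) = m (B' j) := fun i j hij => by
    have haij : a i = a j := by rw [ha, ha, hij]
    rw [hm, dempsterCombo_member hsub hantichain a (hne i),
      dempsterCombo_member hsub hantichain a (hne j)]
    congr 1
    have hi : 1 - a j ≠ 0 := (sub_pos.mpr (ha01 j).2).ne'
    refine mul_right_cancel₀ hi ?_
    rw [weight_singleton a j, ← haij, weight_singleton a i]
  have hcard_le : ∀ i j, m (B' i) ≤ m (B' j) → (B' i).card ≤ (B' j).card := fun i j h =>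
    not_lt.mp fun hlt => (hmlt j i hlt).not_ge h
  have hsplit : ∀ i, Bel (B' i) = m (B' i) + s i := fun i => by
    rw [hBel, hs, hm, credibility_member hsub hantichain a (hne i)]
  have memBel : ∀ i, i ∈ WBel ↔ ∀ j, Bel (B' j) ≤ Bel (B' i) := fun i => by rw [hWBel]; rfl
  have memCard : ∀ i, i ∈ WCard ↔ ∀ j, (B' j).card ≤ (B' i).card := fun i => by
    rw [hWCard]; rfl
  constructor
  · intro hW
    refine ⟨fun i hi j hj => ?_, fun i hi j hj => ?_⟩
    · have hmij := hmeq i j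
        (le_antisymm ((memCard j).mp (hW ▸ hj) i) ((memCard i).mp (hW ▸ hi) j))
      have hBij := le_antisymm ((memBel j).mp hj i) ((memBel i).mp hi j)
      rw [hsplit, hsplit] at hBij
      exact ⟨hmij, by linarith⟩
    · have hcj : (B' j).card < (B' i).card := by
        by_contra! hle
        exact hj (hW ▸ (memCard j).mpr fun k => ((memCard i).mp (hW ▸ hi) k).trans hle)
      have hBj : Bel (B' j) < Bel (B' i) := by
        by_contra! hle
        exact hj ((memBel j).mpr fun k => ((memBel i).mp hi k).trans hle)
      rw [hsplit, hsplit] at hBj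
      exact max_lt (sub_pos.mpr (hmlt j i hcj)) (by linarith)
  · rintro ⟨heq, hgt⟩
    have hgt' : ∀ i ∈ WBel, ∀ j, j ∉ WBel → m (B' j) < m (B' i) := fun i hi j hj =>
      sub_pos.mp ((le_max_left _ _).trans_lt (hgt i hi j hj))
    ext i
    refine ⟨fun hi => (memCard i).mpr fun j => hcard_le j i ?_, fun hi => ?_⟩
    · by_cases hj : j ∈ WBel
      · exact (heq j hj i hi).1.le
      · exact (hgt' i hi j hj).le
    · by_contra hni
      obtain ⟨k, -, hk⟩ := Finset.exists_max_image Finset.univ (fun j => Bel (B' j)) ⟨i₀, by simp⟩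
      have hkW : k ∈ WBel := (memBel k).mpr fun j => hk j (Finset.mem_univ j)
      have hlt := hgt' k hkW i hni
      rcases ((memCard i).mp hi k).lt_or_eq with h | h
      · exact (hmlt k i h).not_gt hlt
      · exact hlt.ne' (hmeq k i h)
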